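/- For countable linear orders A and B, the Scott rank of their concatenation satisfies SR(A + B) ≤ max{SR(A), SR(B)} · 2 + 3. -/

import Mathlib

/-- The standard back-and-forth relation between tuples in linear orders, defined by
transfinite recursion: `bfT 0` holds iff the tuples satisfy the same atomic formulas;
`bfT ξ L M a b` iff the tuples satisfy the same atomic formulas and for every `γ < ξ`
and every tuple `d` in `M` there is a tuple `c` in `L` with `bfT γ M L (b ++ d) (a ++ c)`. -/
def bfT (ξ : Ordinal) (L : Type) [LinearOrder L] (M : Type) [LinearOrder M]
    {k : ℕ} (a : Fin k → L) (b : Fin k → M) : Prop :=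
  (∀ i j, a i ≤ a j ↔ b i ≤ b j) ∧
  ∀ γ < ξ, ∀ (l : ℕ) (d : Fin l → M), ∃ c : Fin l → L,
    bfT γ M L (Fin.append b d) (Fin.append a c)
termination_by ξ

/-- `rk L a` is the least ordinal `α` such that every tuple `b` with
`(L, a) ≤_α (L, b)` is automorphic to `a`. -/
noncomputable def rk (L : Type) [LinearOrder L] {k : ℕ} (a : Fin k → L) : Ordinal :=
  sInf {α | ∀ b : Fin k → L, bfT α L L a b → ∃ f : L ≃o L, ∀ i, f (a i) = b i}

/-- The Scott rank of a linear order: the least ordinal strictly greater than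
`rk L a` for every finite tuple `a` in `L`. -/
noncomputable def scottRank (L : Type) [LinearOrder L] : Ordinal :=
  sInf {α | ∀ (k : ℕ) (a : Fin k → L), rk L a < α}

universe v

theorem bfT_iff {ξ : Ordinal.{v}} {L : Type} [LinearOrder L] {M : Type} [LinearOrder M]
    {k : ℕ} {a : Fin k → L} {b : Fin k → M} : bfT ξ L M a b ↔
    (∀ i j, a i ≤ a j ↔ b i ≤ b j) ∧
    ∀ γ < ξ, ∀ (l : ℕ) (d : Fin l → M), ∃ c : Fin l → L,
    bfT γ M L (Fin.append b d) (Fin.append a c) := by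
  rw [bfT]

theorem bfT_mono {ξ ζ : Ordinal.{v}} (hz : ζ ≤ ξ) {L : Type} [LinearOrder L] {M : Type}
    [LinearOrder M] {k : ℕ} {a : Fin k → L} {b : Fin k → M} (h : bfT ξ L M a b) :
    bfT ζ L M a b := by
  rw [bfT_iff] at h ⊢
  exact ⟨h.1, fun γ hγ => h.2 γ (hγ.trans_le hz)⟩

/-- The relation depends only on the set of pairs, monotonically. -/
theorem bfT_sub (ξ : Ordinal.{v}) : ∀ {L : Type} [LinearOrder L] {M : Type} [LinearOrder M]
    {k k' : ℕ} {a : Fin k → L} {b : Fin k → M} {a' : Fin k' → L} {b' : Fin k' → M},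
    bfT ξ L M a b → (∀ j, ∃ i, a' j = a i ∧ b' j = b i) → bfT ξ L M a' b' := by
  induction ξ using WellFoundedLT.induction with
  | ind ξ ih =>
    intro L _ M _ k k' a b a' b' h hs
    rw [bfT_iff] at h ⊢
    refine ⟨fun i j => ?_, fun γ hγ l d => ?_⟩
    · obtain ⟨i', h1, h2⟩ := hs i
      obtain ⟨j', h3, h4⟩ := hs j
      rw [h1, h2, h3, h4]
      exact h.1 _ _
    · obtain ⟨c, hc⟩ := h.2 γ hγ l d
      refine ⟨c, ih γ hγ hc ?_⟩
      refine Fin.addCases (fun j => ?_) (fun j => ?_)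
      · obtain ⟨i', h1, h2⟩ := hs j
        exact ⟨Fin.castAdd _ i', by simp [h1, h2]⟩
      · exact ⟨Fin.natAdd _ j, by simp⟩

theorem bfT_swap {ξ ζ : Ordinal.{v}} (hz : ζ < ξ) {L : Type} [LinearOrder L] {M : Type}
    [LinearOrder M] {k : ℕ} {a : Fin k → L} {b : Fin k → M} (h : bfT ξ L M a b) :
    bfT ζ M L b a := by
  rw [bfT_iff] at h
  obtain ⟨c, hc⟩ := h.2 ζ hz 0 Fin.elim0
  exact bfT_sub _ hc (fun j => ⟨Fin.castAdd 0 j, by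
    rw [Fin.append_left, Fin.append_left]; exact ⟨rfl, rfl⟩⟩)

theorem bfT_trans (ξ : Ordinal.{v}) : ∀ {L : Type} [LinearOrder L] {M : Type} [LinearOrder M]
    {N : Type} [LinearOrder N] {k : ℕ} {a : Fin k → L} {b : Fin k → M} {c : Fin k → N},
    bfT ξ L M a b → bfT ξ M N b c → bfT ξ L N a c := by
  induction ξ using WellFoundedLT.induction with
  | ind ξ ih =>
    intro L _ M _ N _ k a b c h1 h2
    rw [bfT_iff] at h1 h2 ⊢
    refine ⟨fun i j => (h1.1 i j).trans (h2.1 i j), fun γ hγ l d => ?_⟩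
    obtain ⟨e, he⟩ := h2.2 γ hγ l d
    obtain ⟨f, hf⟩ := h1.2 γ hγ l e
    exact ⟨f, ih γ hγ he hf⟩

theorem bfT_iso (ξ : Ordinal.{v}) : ∀ {L : Type} [LinearOrder L] {M : Type} [LinearOrder M]
    (f : L ≃o M) {k : ℕ} {a : Fin k → L} {b : Fin k → M}, (∀ i, f (a i) = b i) →
    bfT ξ L M a b := by
  induction ξ using WellFoundedLT.induction with
  | ind ξ ih =>
    intro L _ M _ f k a b h
    rw [bfT_iff]
    refine ⟨fun i j => by rw [← h, ← h, f.le_iff_le], fun γ hγ l d => ?_⟩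
    refine ⟨fun i => f.symm (d i), ih γ hγ f.symm ?_⟩
    refine Fin.addCases (fun j => ?_) (fun j => ?_)
    · simp [← h]
    · simp

theorem orderIso_of_rel {L M : Type} [LinearOrder L] [LinearOrder M] (R : L → M → Prop)
    (h1 : ∀ x, ∃ y, R x y) (h2 : ∀ y, ∃ x, R x y)
    (h3 : ∀ x y x' y', R x y → R x' y' → (x ≤ x' ↔ y ≤ y')) :
    ∃ f : L ≃o M, ∀ x y, R x y → f x = y := by
  choose f hf using h1
  choose g hg using h2
  have hu : ∀ x y y', R x y → R x y' → y = y' := fun x y y' h h' =>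
    le_antisymm ((h3 _ _ _ _ h h').1 le_rfl) ((h3 _ _ _ _ h' h).1 le_rfl)
  have hu' : ∀ x x' y, R x y → R x' y → x = x' := fun x x' y h h' =>
    le_antisymm ((h3 _ _ _ _ h h').2 le_rfl) ((h3 _ _ _ _ h' h).2 le_rfl)
  refine ⟨⟨⟨f, g, fun x => hu' _ _ _ (hg _) (hf _), fun y => hu _ _ _ (hf _) (hg _)⟩, ?_⟩, ?_⟩
  · intro x x'
    exact (h3 _ _ _ _ (hf x) (hf x')).symm
  · intro x y h
    exact hu _ _ _ (hf x) h

/-- Generic back-and-forth construction. -/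
theorem back_and_forth {L M : Type} [LinearOrder L] [LinearOrder M] [Countable L] [Countable M]
    (J : ∀ k : ℕ, (Fin k → L) → (Fin k → M) → Prop)
    (hat : ∀ k a b, J k a b → ∀ i j, a i ≤ a j ↔ b i ≤ b j)
    (forth : ∀ k a b, J k a b → ∀ x, ∃ y, J (k + 1) (Fin.append a ![x]) (Fin.append b ![y]))
    (back : ∀ k a b, J k a b → ∀ y, ∃ x, J (k + 1) (Fin.append a ![x]) (Fin.append b ![y]))
    {k : ℕ} {a : Fin k → L} {b : Fin k → M} (h : J k a b) :
    ∃ f : L ≃o M, ∀ i, f (a i) = b i := by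
  classical
  let Pt := {S : Set (L × M) // ∃ k a b, J k a b ∧ S = Set.range (fun i => (a i, b i))}
  have hins : ∀ (k : ℕ) (a : Fin k → L) (b : Fin k → M) x y,
      Set.range (fun i => (a i, b i)) ⊆
        Set.range (fun i => (Fin.append a ![x] i, Fin.append b ![y] i)) ∧
      (x, y) ∈ Set.range (fun i => (Fin.append a ![x] i, Fin.append b ![y] i)) := by
    intro k a b x y
    refine ⟨?_, ⟨Fin.natAdd _ 0, by simp⟩⟩
    rintro _ ⟨i, rfl⟩
    exact ⟨Fin.castAdd _ i, by simp⟩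
  let D : L ⊕ M → Order.Cofinal Pt := fun z => match z with
    | Sum.inl x => ⟨{S | ∃ y, (x, y) ∈ S.1}, by
        rintro ⟨S, k, a, b, hJ, rfl⟩
        obtain ⟨y, hy⟩ := forth k a b hJ x
        exact ⟨⟨_, _, _, _, hy, rfl⟩, ⟨y, (hins k a b x y).2⟩, (hins k a b x y).1⟩⟩
    | Sum.inr y => ⟨{S | ∃ x, (x, y) ∈ S.1}, by
        rintro ⟨S, k, a, b, hJ, rfl⟩
        obtain ⟨x, hy⟩ := back k a b hJ y
        exact ⟨⟨_, _, _, _, hy, rfl⟩, ⟨x, (hins k a b x y).2⟩, (hins k a b x y).1⟩⟩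
  let _ : Encodable (L ⊕ M) := Encodable.ofCountable _
  let p : Pt := ⟨_, k, a, b, h, rfl⟩
  let I := Order.idealOfCofinals p D
  obtain ⟨f, hf⟩ := orderIso_of_rel (fun x y => ∃ S ∈ I, (x, y) ∈ S.1)
    (by
      intro x
      obtain ⟨S, ⟨y, hy⟩, hS⟩ := Order.cofinal_meets_idealOfCofinals p D (Sum.inl x)
      exact ⟨y, S, hS, hy⟩)
    (by
      intro y
      obtain ⟨S, ⟨x, hy⟩, hS⟩ := Order.cofinal_meets_idealOfCofinals p D (Sum.inr y)
      exact ⟨x, S, hS, hy⟩)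
    (by
      rintro x y x' y' ⟨S, hS, h1⟩ ⟨T, hT, h2⟩
      obtain ⟨⟨U, k, a, b, hJ, rfl⟩, hU, h3, h4⟩ := I.directed S hS T hT
      obtain ⟨i, hi⟩ := h3 h1
      obtain ⟨j, hj⟩ := h4 h2
      simp only [Prod.mk.injEq] at hi hj
      rw [← hi.1, ← hi.2, ← hj.1, ← hj.2]
      exact hat _ _ _ hJ i j)
  exact ⟨f, fun i => hf _ _ ⟨p, Order.mem_idealOfCofinals p D, ⟨i, rfl⟩⟩⟩

/-- `L` has all orbits determined below `α`. -/
def Good (α : Ordinal.{v}) (L : Type) [LinearOrder L] : Prop :=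
  ∀ (k : ℕ) (a : Fin k → L), ∃ γ < α, ∀ b : Fin k → L, bfT γ L L a b →
    ∃ f : L ≃o L, ∀ i, f (a i) = b i

theorem rk_nonempty (L : Type) [LinearOrder L] [Countable L] {k : ℕ} (a : Fin k → L) :
    ∃ α : Ordinal.{v}, ∀ b : Fin k → L, bfT α L L a b → ∃ f : L ≃o L, ∀ i, f (a i) = b i := by
  let g : (Σ k, (Fin k → L) × (Fin k → L)) → Ordinal.{v} :=
    fun q => sInf {ξ | ¬ bfT ξ L L q.2.1 q.2.2}
  obtain ⟨θ, hθ⟩ := Ordinal.bddAbove_of_small (s := Set.range g)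
  have key : ∀ (k : ℕ) (a b : Fin k → L), bfT θ L L a b → ∀ ξ : Ordinal.{v}, bfT ξ L L a b := by
    intro k a b h ξ
    by_contra hn
    have h1 : ¬ bfT (g ⟨k, a, b⟩) L L a b := csInf_mem (s := {ξ | ¬ bfT ξ L L a b}) ⟨ξ, hn⟩
    exact h1 (bfT_mono (hθ ⟨_, rfl⟩) h)
  refine ⟨θ, fun b hb => ?_⟩
  refine back_and_forth (fun k a b => ∀ ξ : Ordinal.{v}, bfT ξ L L a b) ?_ ?_ ?_ (key _ _ _ hb)
  · intro k a b h
    exact (bfT_iff.1 (h 0)).1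
  · intro k a b h x
    have h' := bfT_swap (lt_add_one _) (h (θ + 1 + 1))
    obtain ⟨c, hc⟩ := (bfT_iff.1 h').2 θ (lt_add_one _) 1 ![x]
    refine ⟨c 0, key _ _ _ ?_⟩
    have : c = ![c 0] := by ext i; fin_cases i; rfl
    rwa [this] at hc
  · intro k a b h x
    obtain ⟨c, hc⟩ := (bfT_iff.1 (h (θ + 1 + 1))).2 (θ + 1) (lt_add_one _) 1 ![x]
    refine ⟨c 0, key _ _ _ ?_⟩
    have : c = ![c 0] := by ext i; fin_cases i; rfl
    rw [this] at hc
    exact bfT_swap (lt_add_one _) hc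

theorem good_scottRank (L : Type) [LinearOrder L] [Countable L] :
    Good.{v} (scottRank L) L := by
  intro k a
  refine ⟨rk L a, ?_, csInf_mem (rk_nonempty L a)⟩
  have : scottRank.{v} L ∈ {α : Ordinal.{v} | ∀ (k : ℕ) (a : Fin k → L), rk L a < α} := by
    apply csInf_mem
    let g : (Σ k, (Fin k → L)) → Ordinal.{v} := fun q => rk L q.2
    obtain ⟨θ, hθ⟩ := Ordinal.bddAbove_of_small (s := Set.range g)
    exact ⟨θ + 1, fun k a => Order.lt_add_one_iff.2 (hθ ⟨⟨k, a⟩, rfl⟩)⟩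
  exact this k a

theorem Good.mono {α β : Ordinal.{v}} (h : α ≤ β) {L : Type} [LinearOrder L] (hL : Good α L) :
    Good β L := fun k a => by
  obtain ⟨γ, hγ, H⟩ := hL k a
  exact ⟨γ, hγ.trans_le h, H⟩

theorem Good.iso {α : Ordinal.{v}} {L M : Type} [LinearOrder L] [LinearOrder M] (hL : Good α L)
    (f : L ≃o M) : Good α M := fun k a => by
  obtain ⟨γ, hγ, H⟩ := hL k (fun i => f.symm (a i))
  refine ⟨γ, hγ, fun b hb => ?_⟩
  obtain ⟨g, hg⟩ := H (fun i => f.symm (b i))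
    (bfT_trans _ (bfT_iso _ f (by simp)) (bfT_trans _ hb (bfT_iso _ f.symm (by simp))))
  refine ⟨(f.symm.trans g).trans f, fun i => ?_⟩
  simp [hg]

/-- Scott sentence of complexity `Π_{α+1}`. -/
theorem Good.exists_iso {α : Ordinal.{v}} {L M : Type} [LinearOrder L] [LinearOrder M]
    [Countable L] [Countable M] (hL : Good α L) {k : ℕ} {a : Fin k → L} {b : Fin k → M}
    (h : bfT (α + 1) L M a b) : ∃ f : L ≃o M, ∀ i, f (a i) = b i := by
  have hE : bfT (α + 1) L M Fin.elim0 Fin.elim0 := bfT_sub _ h (fun j => j.elim0)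
  have move : ∀ (n : ℕ) (d : Fin n → M), ∃ c : Fin n → L, bfT α M L d c := by
    intro n d
    obtain ⟨c, hc⟩ := (bfT_iff.1 hE).2 α (lt_add_one _) n d
    exact ⟨c, bfT_sub _ hc (fun j => ⟨Fin.natAdd _ j, by simp⟩)⟩
  refine back_and_forth (fun k a b => bfT α M L b a) ?_ ?_ ?_ (bfT_swap (lt_add_one _) h)
  · intro k a b h i j
    exact ((bfT_iff.1 h).1 i j).symm
  · intro k a b h x
    obtain ⟨γ, hγ, H⟩ := hL _ (Fin.append a ![x])
    obtain ⟨d, hd⟩ := (bfT_iff.1 h).2 γ hγ 1 ![x]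
    obtain ⟨e, he⟩ := move _ (Fin.append b d)
    obtain ⟨f, hf⟩ := H e (bfT_trans _ hd (bfT_mono hγ.le he))
    refine ⟨d 0, ?_⟩
    have : d = ![d 0] := by ext i; fin_cases i; rfl
    rw [← this]
    exact bfT_trans _ he (bfT_iso _ f.symm (fun i => by rw [← hf]; simp))
  · intro k a b h y
    obtain ⟨γ, hγ, H⟩ := hL _ a
    obtain ⟨e, he⟩ := move _ (Fin.append b ![y])
    have he' : bfT α M L b (fun i => e (Fin.castAdd 1 i)) :=
      bfT_sub _ he (fun j => ⟨Fin.castAdd _ j, by simp⟩)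
    obtain ⟨f, hf⟩ := H _ (bfT_trans _ (bfT_swap hγ h) (bfT_mono hγ.le he'))
    refine ⟨f.symm (e (Fin.natAdd k 0)), ?_⟩
    refine bfT_trans _ he (bfT_iso _ f.symm ?_)
    refine Fin.addCases (fun j => ?_) (fun j => ?_)
    · simp [← hf]
    · fin_cases j
      simp

/-- Relativization of the back-and-forth relation. -/
theorem bfT_restrict (β γ : Ordinal.{v}) : ∀ {L : Type} [LinearOrder L] {M : Type}
    [LinearOrder M] {P : Type} [LinearOrder P] {Q : Type} [LinearOrder Q]
    (i : P ↪o L) (j : Q ↪o M) {m : ℕ} (u : Fin m → L) (w : Fin m → M)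
    (_ : ∀ x y, bfT β L M (Fin.append u ![x]) (Fin.append w ![y]) →
      (x ∈ Set.range i ↔ y ∈ Set.range j))
    (_ : ∀ x y, bfT β M L (Fin.append w ![y]) (Fin.append u ![x]) →
      (x ∈ Set.range i ↔ y ∈ Set.range j))
    {k : ℕ} (t : Fin k → P) (s : Fin k → Q),
    bfT (β + γ) L M (Fin.append u (fun n => i (t n))) (Fin.append w (fun n => j (s n))) →
    bfT γ P Q t s := by
  induction γ using WellFoundedLT.induction with
  | ind γ ih =>
    intro L _ M _ P _ Q _ i j m u w H1 H2 k t s h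
    rw [bfT_iff] at h ⊢
    refine ⟨fun p q => ?_, fun δ hδ l d => ?_⟩
    · have := h.1 (Fin.natAdd _ p) (Fin.natAdd _ q)
      simpa using this
    · obtain ⟨c, hc⟩ := h.2 (β + δ) (by gcongr) l (fun n => j (d n))
      have hcP : ∀ n, ∃ e, i e = c n := by
        intro n
        refine (H2 (c n) (j (d n)) ?_).2 ⟨_, rfl⟩
        refine bfT_sub _ (bfT_mono (le_self_add (a := β) (b := δ)) hc) ?_
        refine Fin.addCases (fun p => ?_) (fun p => ?_)
        · exact ⟨Fin.castAdd _ (Fin.castAdd _ p), by simp⟩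
        · fin_cases p
          exact ⟨Fin.natAdd _ n, by simp⟩
      choose e he using hcP
      refine ⟨e, ih δ hδ j i w u (fun x y h => (H2 y x h).symm) (fun x y h => (H1 y x h).symm)
        _ _ (bfT_sub _ hc ?_)⟩
      refine Fin.addCases (fun p => ?_) (Fin.addCases (fun p => ?_) (fun p => ?_))
      · exact ⟨Fin.castAdd _ (Fin.castAdd _ p), by simp⟩
      · exact ⟨Fin.castAdd _ (Fin.natAdd _ p), by simp⟩
      · exact ⟨Fin.natAdd _ p, by simp [he]⟩

theorem exists_filter {k : ℕ} (s : Fin k → Prop) :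
    ∃ (n : ℕ) (e : Fin n → Fin k), ∀ i, s i ↔ ∃ j, e j = i := by
  classical
  let e := Fintype.equivFin {i // s i}
  refine ⟨_, fun j => (e.symm j).1, fun i => ⟨fun h => ⟨e ⟨i, h⟩, by simp⟩, ?_⟩⟩
  rintro ⟨j, rfl⟩
  exact (e.symm j).2

/-- Gluing with the identity outside of a convex set. -/
theorem bfT_glue (γ : Ordinal.{v}) : ∀ {L : Type} [LinearOrder L] (P : Set L)
    (_ : ∀ z ∉ P, ∀ p ∈ P, ∀ q ∈ P, (z ≤ p ↔ z ≤ q) ∧ (p ≤ z ↔ q ≤ z))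
    {n k : ℕ} (t t' : Fin n → P) (a b : Fin k → L),
    bfT γ P P t t' →
    (∀ i, (∃ j, a i = t j ∧ b i = t' j) ∨ (a i = b i ∧ a i ∉ P)) → bfT γ L L a b := by
  induction γ using WellFoundedLT.induction with
  | ind γ ih =>
    intro L _ P hP n k t t' a b h hab
    rw [bfT_iff] at h ⊢
    refine ⟨fun i j => ?_, fun δ hδ l d => ?_⟩
    · rcases hab i with ⟨i', h1, h2⟩ | ⟨h1, h2⟩ <;> rcases hab j with ⟨j', h3, h4⟩ | ⟨h3, h4⟩
      · rw [h1, h2, h3, h4]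
        exact h.1 i' j'
      · rw [h1, h2, ← h3]
        exact (hP _ h4 _ (t i').2 _ (t' i').2).2
      · rw [← h1, h3, h4]
        exact (hP _ h2 _ (t j').2 _ (t' j').2).1
      · rw [h1, h3]
    · classical
      obtain ⟨N, e, he⟩ := exists_filter (fun i => d i ∈ P)
      obtain ⟨c, hc⟩ := h.2 δ hδ N (fun j => ⟨d (e j), (he _).2 ⟨j, rfl⟩⟩)
      choose g hg using fun i => (he i).1
      refine ⟨fun i => if h : d i ∈ P then (c (g i h) : L) else d i, ih δ hδ P hP _ _ _ _ hc ?_⟩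
      refine Fin.addCases (fun p => ?_) (fun p => ?_)
      · rcases hab p with ⟨j, h1, h2⟩ | ⟨h1, h2⟩
        · left
          exact ⟨Fin.castAdd _ j, by simp [h1, h2]⟩
        · right
          simp [← h1, h2]
      · by_cases hp : d p ∈ P
        · left
          exact ⟨Fin.natAdd _ (g p hp), by simp [hp, hg]⟩
        · right
          simp [hp]

theorem Good.sub {α : Ordinal.{v}} {L : Type} [LinearOrder L] (hL : Good α L) (P : Set L) (x : L)
    (hP : P = Set.Iio x ∨ P = Set.Ioi x) : Good α P := by
  intro k t
  obtain ⟨γ, hγ, H⟩ := hL (k + 1) (Fin.append (fun i => (t i : L)) ![x])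
  refine ⟨γ, hγ, fun t' ht => ?_⟩
  have hx : x ∉ P := by rcases hP with rfl | rfl <;> simp
  have hconv : ∀ z ∉ P, ∀ p ∈ P, ∀ q ∈ P, (z ≤ p ↔ z ≤ q) ∧ (p ≤ z ↔ q ≤ z) := by
    rcases hP with rfl | rfl
    · intro z hz p hp q hq
      simp only [Set.mem_Iio, not_lt] at hz hp hq
      have h1 := hp.trans_le hz
      have h2 := hq.trans_le hz
      exact ⟨iff_of_false h1.not_ge h2.not_ge, iff_of_true h1.le h2.le⟩
    · intro z hz p hp q hq
      simp only [Set.mem_Ioi, not_lt] at hz hp hq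
      have h1 := hz.trans_lt hp
      have h2 := hz.trans_lt hq
      exact ⟨iff_of_true h1.le h2.le, iff_of_false h1.not_ge h2.not_ge⟩
  obtain ⟨f, hf⟩ := H (Fin.append (fun i => (t' i : L)) ![x])
    (bfT_glue γ P hconv t t' _ _ ht (by
      refine Fin.addCases (fun p => ?_) (fun p => ?_)
      · left
        exact ⟨p, by simp⟩
      · right
        fin_cases p
        simpa using hx))
  have hfx : f x = x := by simpa using hf (Fin.natAdd _ 0)
  have hft : ∀ i, f (t i) = t' i := fun i => by simpa using hf (Fin.castAdd _ i)
  have hmem : ∀ y, y ∈ P ↔ f y ∈ P := by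
    intro y
    rcases hP with rfl | rfl
    · simp only [Set.mem_Iio]
      conv_rhs => rw [← hfx]
      simp
    · simp only [Set.mem_Ioi]
      conv_rhs => rw [← hfx]
      simp
  obtain ⟨g, hg⟩ := orderIso_of_rel (fun (y z : P) => f y = z)
    (fun y => ⟨⟨f y, (hmem _).1 y.2⟩, rfl⟩)
    (fun z => ⟨⟨f.symm z, (hmem _).2 (by simp)⟩, by simp⟩)
    (by
      intro y z y' z' h h'
      rw [← Subtype.coe_le_coe, ← Subtype.coe_le_coe, ← h, ← h', f.le_iff_le])
  exact ⟨g, fun i => hg _ _ (hft i)⟩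

theorem bfT_Iio {γ : Ordinal.{v}} {L M : Type} [LinearOrder L] [LinearOrder M] (p : L) (q : M)
    {k : ℕ} (t : Fin k → Set.Iio p) (s : Fin k → Set.Iio q)
    (h : bfT γ L M (Fin.append ![p] (fun n => (t n : L))) (Fin.append ![q] (fun n => (s n : M)))) :
    bfT γ (Set.Iio p) (Set.Iio q) t s := by
  refine bfT_restrict 0 γ (OrderEmbedding.subtype _) (OrderEmbedding.subtype _) ![p] ![q]
    ?_ ?_ t s (by rw [zero_add]; exact h)
  · intro x y hxy
    have := (bfT_iff.1 hxy).1 (Fin.castAdd _ 0) (Fin.natAdd _ 0)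
    rw [Fin.append_left, Fin.append_right, Fin.append_left, Fin.append_right] at this
    simp only [Matrix.cons_val_fin_one] at this
    simp [← not_le, this]
  · intro x y hxy
    have := (bfT_iff.1 hxy).1 (Fin.castAdd _ 0) (Fin.natAdd _ 0)
    rw [Fin.append_left, Fin.append_right, Fin.append_left, Fin.append_right] at this
    simp only [Matrix.cons_val_fin_one] at this
    simp [← not_le, this]

theorem bfT_Ioi {γ : Ordinal.{v}} {L M : Type} [LinearOrder L] [LinearOrder M] (p : L) (q : M)
    {k : ℕ} (t : Fin k → Set.Ioi p) (s : Fin k → Set.Ioi q)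
    (h : bfT γ L M (Fin.append ![p] (fun n => (t n : L))) (Fin.append ![q] (fun n => (s n : M)))) :
    bfT γ (Set.Ioi p) (Set.Ioi q) t s := by
  refine bfT_restrict 0 γ (OrderEmbedding.subtype _) (OrderEmbedding.subtype _) ![p] ![q]
    ?_ ?_ t s (by rw [zero_add]; exact h)
  · intro x y hxy
    have := (bfT_iff.1 hxy).1 (Fin.natAdd _ 0) (Fin.castAdd _ 0)
    rw [Fin.append_right, Fin.append_left, Fin.append_right, Fin.append_left] at this
    simp only [Matrix.cons_val_fin_one] at this
    simp [← not_le, this]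
  · intro x y hxy
    have := (bfT_iff.1 hxy).1 (Fin.natAdd _ 0) (Fin.castAdd _ 0)
    rw [Fin.append_right, Fin.append_left, Fin.append_right, Fin.append_left] at this
    simp only [Matrix.cons_val_fin_one] at this
    simp [← not_le, this]

/-- Cutting at a point. -/
theorem point_cut {α : Ordinal.{v}} {C : Type} [LinearOrder C] [Countable C] (p q : C)
    (h1 : Good α (Set.Iio p)) (h2 : Good α (Set.Ioi p)) {k : ℕ} (c c' : Fin k → C)
    (hb : bfT (α + 1) C C (Fin.append c ![p]) (Fin.append c' ![q])) :
    ∃ f : C ≃o C, ∀ i, f (c i) = c' i := by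
  have hat := (bfT_iff.1 hb).1
  have hat1 : ∀ i, c i ≤ p ↔ c' i ≤ q := fun i => by
    simpa using hat (Fin.castAdd _ i) (Fin.natAdd _ 0)
  have hat2 : ∀ i, p ≤ c i ↔ q ≤ c' i := fun i => by
    simpa using hat (Fin.natAdd _ 0) (Fin.castAdd _ i)
  have hlt : ∀ i, c i < p ↔ c' i < q := fun i => by rw [← not_le, hat2, not_le]
  have hgt : ∀ i, p < c i ↔ q < c' i := fun i => by rw [← not_le, hat1, not_le]
  obtain ⟨f, hf⟩ : ∃ f : Set.Iio p ≃o Set.Iio q, ∀ i (h : c i < p), f ⟨c i, h⟩ = c' i := by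
    obtain ⟨n, e, he⟩ := exists_filter (fun i => c i < p)
    obtain ⟨f, hf⟩ := h1.exists_iso (bfT_Iio (γ := α + 1) p q
      (fun j => ⟨c (e j), (he _).2 ⟨j, rfl⟩⟩)
      (fun j => ⟨c' (e j), (hlt _).1 ((he _).2 ⟨j, rfl⟩)⟩) (bfT_sub _ hb (by
        refine Fin.addCases (fun p => ?_) (fun p => ?_)
        · fin_cases p
          exact ⟨Fin.natAdd _ 0, by simp⟩
        · exact ⟨Fin.castAdd _ (e p), by simp⟩)))
    refine ⟨f, fun i h => ?_⟩
    obtain ⟨j, rfl⟩ := (he i).1 h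
    rw [hf j]
  obtain ⟨g, hg⟩ : ∃ f : Set.Ioi p ≃o Set.Ioi q, ∀ i (h : p < c i), f ⟨c i, h⟩ = c' i := by
    obtain ⟨n, e, he⟩ := exists_filter (fun i => p < c i)
    obtain ⟨f, hf⟩ := h2.exists_iso (bfT_Ioi (γ := α + 1) p q
      (fun j => ⟨c (e j), (he _).2 ⟨j, rfl⟩⟩)
      (fun j => ⟨c' (e j), (hgt _).1 ((he _).2 ⟨j, rfl⟩)⟩) (bfT_sub _ hb (by
        refine Fin.addCases (fun p => ?_) (fun p => ?_)
        · fin_cases p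
          exact ⟨Fin.natAdd _ 0, by simp⟩
        · exact ⟨Fin.castAdd _ (e p), by simp⟩)))
    refine ⟨f, fun i h => ?_⟩
    obtain ⟨j, rfl⟩ := (he i).1 h
    rw [hf j]
  obtain ⟨F, hF⟩ := orderIso_of_rel
    (fun x y : C => (∃ h : x < p, f ⟨x, h⟩ = y) ∨ (x = p ∧ y = q) ∨ (∃ h : p < x, g ⟨x, h⟩ = y))
    (by
      intro x
      rcases lt_trichotomy x p with h | h | h
      · exact ⟨_, Or.inl ⟨h, rfl⟩⟩
      · exact ⟨_, Or.inr (Or.inl ⟨h, rfl⟩)⟩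
      · exact ⟨_, Or.inr (Or.inr ⟨h, rfl⟩)⟩)
    (by
      intro y
      rcases lt_trichotomy y q with h | h | h
      · exact ⟨f.symm ⟨y, h⟩, Or.inl ⟨(f.symm ⟨y, h⟩).2, by simp⟩⟩
      · exact ⟨_, Or.inr (Or.inl ⟨rfl, h⟩)⟩
      · exact ⟨g.symm ⟨y, h⟩, Or.inr (Or.inr ⟨(g.symm ⟨y, h⟩).2, by simp⟩)⟩)
    (by
      have hfl : ∀ z, (f z : C) < q := fun z => (f z).2
      have hgl : ∀ z, q < (g z : C) := fun z => (g z).2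
      rintro x y x' y' (⟨h, rfl⟩ | ⟨rfl, rfl⟩ | ⟨h, rfl⟩) (⟨h', rfl⟩ | ⟨h', rfl⟩ | ⟨h', rfl⟩)
      · rw [Subtype.coe_le_coe, f.le_iff_le]; exact Iff.rfl
      · subst h'
        exact iff_of_true h.le (hfl _).le
      · exact iff_of_true (h.trans h').le ((hfl _).trans (hgl _)).le
      · exact iff_of_false h'.not_ge (hfl _).not_ge
      · simp [h']
      · exact iff_of_true h'.le (hgl _).le
      · exact iff_of_false (h'.trans h).not_ge ((hfl _).trans (hgl _)).not_ge
      · subst h'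
        exact iff_of_false h.not_ge (hgl _).not_ge
      · rw [Subtype.coe_le_coe, g.le_iff_le]; exact Iff.rfl)
  refine ⟨F, fun i => hF _ _ ?_⟩
  rcases lt_trichotomy (c i) p with h | h | h
  · exact Or.inl ⟨h, hf i h⟩
  · exact Or.inr (Or.inl ⟨h, le_antisymm ((hat1 i).1 h.le) ((hat2 i).1 h.ge)⟩)
  · exact Or.inr (Or.inr ⟨h, hg i h⟩)

theorem iso_Iio_inl {A B : Type} [LinearOrder A] [LinearOrder B] (x : A) :
    Nonempty (Set.Iio x ≃o Set.Iio (Sum.inlₗ x : A ⊕ₗ B)) := by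
  obtain ⟨f, -⟩ := orderIso_of_rel
    (fun (u : Set.Iio x) (w : Set.Iio (Sum.inlₗ x : A ⊕ₗ B)) => (Sum.inlₗ u.1 : A ⊕ₗ B) = w.1)
    (fun u => ⟨⟨Sum.inlₗ u.1, Sum.Lex.inl_lt_inl_iff.2 u.2⟩, rfl⟩)
    (by
      rintro ⟨w, hw⟩
      rcases w with w | w
      · exact ⟨⟨w, Sum.Lex.inl_lt_inl_iff.1 hw⟩, rfl⟩
      · exact absurd hw Sum.Lex.not_inr_lt_inl)
    (by
      intro u w u' w' h h'
      rw [← Subtype.coe_le_coe, ← Subtype.coe_le_coe, ← h, ← h']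
      exact Sum.Lex.inl_le_inl_iff.symm)
  exact ⟨f⟩

theorem iso_Ioi_inr {A B : Type} [LinearOrder A] [LinearOrder B] (x : B) :
    Nonempty (Set.Ioi x ≃o Set.Ioi (Sum.inrₗ x : A ⊕ₗ B)) := by
  obtain ⟨f, -⟩ := orderIso_of_rel
    (fun (u : Set.Ioi x) (w : Set.Ioi (Sum.inrₗ x : A ⊕ₗ B)) => (Sum.inrₗ u.1 : A ⊕ₗ B) = w.1)
    (fun u => ⟨⟨Sum.inrₗ u.1, Sum.Lex.inr_lt_inr_iff.2 u.2⟩, rfl⟩)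
    (by
      rintro ⟨w, hw⟩
      rcases w with w | w
      · exact absurd hw Sum.Lex.not_inr_lt_inl
      · exact ⟨⟨w, Sum.Lex.inr_lt_inr_iff.1 hw⟩, rfl⟩)
    (by
      intro u w u' w' h h'
      rw [← Subtype.coe_le_coe, ← Subtype.coe_le_coe, ← h, ← h']
      exact Sum.Lex.inr_le_inr_iff.symm)
  exact ⟨f⟩

theorem two_add_le (γ : Ordinal.{v}) : 2 + γ ≤ γ + 2 := by
  rcases lt_or_ge γ Ordinal.omega0 with h | h
  · obtain ⟨n, rfl⟩ := Ordinal.lt_omega0.1 h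
    have : ((2 + n : ℕ) : Ordinal.{v}) = ((n + 2 : ℕ) : Ordinal.{v}) := by rw [add_comm]
    push_cast at this
    exact this.le
  · have : (2 : Ordinal.{v}) + γ = γ := by
      have := Ordinal.natCast_add_of_omega0_le h 2
      simpa using this
    rw [this]
    exact le_self_add

/-- Case where the cut is definable. -/
theorem cut_case {α β γ : Ordinal.{v}} {A B : Type} [LinearOrder A] [LinearOrder B]
    (hcut : ∀ z w : A ⊕ₗ B, bfT β (A ⊕ₗ B) (A ⊕ₗ B) ![z] ![w] →
      ((∃ x, Sum.inlₗ x = z) ↔ ∃ x, Sum.inlₗ x = w))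
    (hA : Good α A) (hB : Good α B) (hα : ∀ δ < α, β + δ ≤ γ) {k : ℕ} (c c' : Fin k → A ⊕ₗ B)
    (h : bfT γ (A ⊕ₗ B) (A ⊕ₗ B) c c') :
    ∃ f : A ⊕ₗ B ≃o A ⊕ₗ B, ∀ i, f (c i) = c' i := by
  have hor : ∀ z : A ⊕ₗ B, (∃ x, Sum.inrₗ x = z) ↔ ¬ ∃ x, Sum.inlₗ x = z := by
    intro z
    rcases z with z | z
    · refine iff_of_false ?_ (not_not.2 ⟨z, rfl⟩)
      rintro ⟨x, hx⟩
      cases hx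
    · refine iff_of_true ⟨z, rfl⟩ ?_
      rintro ⟨x, hx⟩
      cases hx
  have hcut' : ∀ z w : A ⊕ₗ B, bfT β (A ⊕ₗ B) (A ⊕ₗ B) ![z] ![w] →
      ((∃ x, Sum.inrₗ x = z) ↔ ∃ x, Sum.inrₗ x = w) := by
    intro z w hzw
    rw [hor, hor, hcut z w hzw]
  have h0 : 0 < α := by
    obtain ⟨δ, hδ, -⟩ := hA 0 Fin.elim0
    exact (zero_le (a := δ)).trans_lt hδ
  have hβ : bfT β (A ⊕ₗ B) (A ⊕ₗ B) c c' := bfT_mono (by simpa using hα 0 h0) h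
  have hsing : ∀ i, bfT β (A ⊕ₗ B) (A ⊕ₗ B) ![c i] ![c' i] := fun i =>
    bfT_sub _ hβ (fun j => ⟨i, by simp⟩)
  have main : ∀ (P : Type) [LinearOrder P] (e : P ↪o A ⊕ₗ B), Good α P →
      (∀ z w : A ⊕ₗ B, bfT β (A ⊕ₗ B) (A ⊕ₗ B) ![z] ![w] →
        ((∃ x, e x = z) ↔ ∃ x, e x = w)) →
      ∃ f : P ≃o P, ∀ i x, e x = c i → e (f x) = c' i := by
    intro P _ e hP hc
    obtain ⟨n, r, hr⟩ := exists_filter (fun i => ∃ x, e x = c i)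
    choose t ht using fun j => (hr (r j)).2 ⟨j, rfl⟩
    choose s hs using fun j => (hc _ _ (hsing (r j))).1 ⟨t j, ht j⟩
    obtain ⟨δ, hδ, H⟩ := hP _ t
    obtain ⟨f, hf⟩ := H s (bfT_restrict β δ e e (Fin.elim0 : Fin 0 → _) Fin.elim0
      (fun x y hxy => hc x y (bfT_sub _ hxy (fun j => ⟨Fin.natAdd _ j, by simp⟩)))
      (fun x y hxy => (hc y x (bfT_sub _ hxy (fun j => ⟨Fin.natAdd _ j, by simp⟩))).symm)
      t s (bfT_sub _ (bfT_mono (hα δ hδ) h) (by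
        refine Fin.addCases (fun p => p.elim0) (fun p => ?_)
        exact ⟨r p, by simp [ht, hs]⟩)))
    refine ⟨f, fun i x hx => ?_⟩
    obtain ⟨j, rfl⟩ := (hr i).1 ⟨x, hx⟩
    have : x = t j := e.injective (by rw [hx, ht])
    rw [this, hf, hs]
  obtain ⟨f, hf⟩ := main A (OrderEmbedding.ofMapLEIff (fun x => Sum.inlₗ x)
    (fun _ _ => Sum.Lex.inl_le_inl_iff)) hA hcut
  obtain ⟨g, hg⟩ := main B (OrderEmbedding.ofMapLEIff (fun x => Sum.inrₗ x)
    (fun _ _ => Sum.Lex.inr_le_inr_iff)) hB hcut'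
  obtain ⟨F, hF⟩ := orderIso_of_rel
    (fun z w : A ⊕ₗ B => (∃ x, z = Sum.inlₗ x ∧ w = Sum.inlₗ (f x)) ∨
      (∃ x, z = Sum.inrₗ x ∧ w = Sum.inrₗ (g x)))
    (by
      intro z
      rcases z with z | z
      · exact ⟨_, Or.inl ⟨z, rfl, rfl⟩⟩
      · exact ⟨_, Or.inr ⟨z, rfl, rfl⟩⟩)
    (by
      intro z
      rcases z with z | z
      · exact ⟨_, Or.inl ⟨f.symm z, rfl, by simp; rfl⟩⟩
      · exact ⟨_, Or.inr ⟨g.symm z, rfl, by simp; rfl⟩⟩)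
    (by
      rintro x y x' y' (⟨u, rfl, rfl⟩ | ⟨u, rfl, rfl⟩) (⟨w, rfl, rfl⟩ | ⟨w, rfl, rfl⟩)
      · rw [Sum.Lex.inl_le_inl_iff, Sum.Lex.inl_le_inl_iff, f.le_iff_le]
      · exact iff_of_true (Sum.Lex.inl_le_inr _ _) (Sum.Lex.inl_le_inr _ _)
      · exact iff_of_false Sum.Lex.not_inr_le_inl Sum.Lex.not_inr_le_inl
      · rw [Sum.Lex.inr_le_inr_iff, Sum.Lex.inr_le_inr_iff, g.le_iff_le])
  refine ⟨F, fun i => hF _ _ ?_⟩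
  by_cases hi : ∃ x, Sum.inlₗ x = c i
  · obtain ⟨x, hx⟩ := hi
    exact Or.inl ⟨x, hx.symm, (hf i x hx).symm⟩
  · obtain ⟨x, hx⟩ := (hor _).2 hi
    exact Or.inr ⟨x, hx.symm, (hg i x hx).symm⟩

/-- For countable linear orders `A`, `B`: `SR (A + B) ≤ max (SR A) (SR B) · 2 + 3`. -/
theorem scottRank_sum (A B : Type) [LinearOrder A] [LinearOrder B]
    [Countable A] [Countable B] :
    scottRank (A ⊕ₗ B) ≤ max (scottRank A) (scottRank B) * 2 + 3 := by
  classical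
  have : Countable (A ⊕ₗ B) := inferInstanceAs (Countable (A ⊕ B))
  set α := max (scottRank A) (scottRank B) with hαdef
  have hA : Good α A := (good_scottRank A).mono (le_max_left _ _)
  have hB : Good α B := (good_scottRank B).mono (le_max_right _ _)
  have h1α : 1 ≤ α := by
    obtain ⟨δ, hδ, -⟩ := hA 0 Fin.elim0
    exact Order.one_le_iff_pos.2 ((zero_le (a := δ)).trans_lt hδ)
  have hm2 : α * 2 = α + α := by
    rw [← one_add_one_eq_two, mul_add, mul_one]
  refine csInf_le' fun k c => ?_
  have h23 : α * 2 + 2 < α * 2 + 3 := by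
    gcongr
    norm_num
  refine lt_of_le_of_lt (csInf_le' fun c' hc => ?_) h23
  by_cases hcase : ∃ (x : A) (y : B), Nonempty (Set.Iio x ≃o Set.Iio (Sum.inrₗ y : A ⊕ₗ B))
  · obtain ⟨x, y, ⟨e⟩⟩ := hcase
    have h1 : Good α (Set.Iio (Sum.inrₗ y : A ⊕ₗ B)) := (hA.sub _ x (Or.inl rfl)).iso e
    have h2 : Good α (Set.Ioi (Sum.inrₗ y : A ⊕ₗ B)) :=
      (hB.sub _ y (Or.inr rfl)).iso (iso_Ioi_inr y).some
    have hle : α + 1 + 1 + 1 ≤ α * 2 + 2 := by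
      rw [hm2, add_assoc (α + 1), one_add_one_eq_two]
      gcongr
    have h3 := bfT_swap (lt_add_one _) (bfT_mono hle hc)
    obtain ⟨d, hd⟩ := (bfT_iff.1 h3).2 (α + 1) (lt_add_one _) 1 ![Sum.inrₗ y]
    have hd0 : d = ![d 0] := by ext i; fin_cases i; rfl
    rw [hd0] at hd
    exact point_cut _ _ h1 h2 c c' hd
  · have key : ∀ (x : A) (y : B),
        ¬ bfT (α + 1) (A ⊕ₗ B) (A ⊕ₗ B) ![Sum.inlₗ x] ![Sum.inrₗ y] := by
      intro x y h
      obtain ⟨e⟩ := iso_Iio_inl (B := B) x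
      have hG : Good α (Set.Iio (Sum.inlₗ x : A ⊕ₗ B)) := (hA.sub _ x (Or.inl rfl)).iso e
      obtain ⟨f, -⟩ := hG.exists_iso (bfT_Iio (γ := α + 1) (Sum.inlₗ x : A ⊕ₗ B)
        (Sum.inrₗ y : A ⊕ₗ B) (Fin.elim0 : Fin 0 → _) Fin.elim0
        (bfT_sub _ h (by
          refine Fin.addCases (fun p => ?_) (fun p => p.elim0)
          refine ⟨p, ?_⟩
          rw [Fin.append_left, Fin.append_left]
          simp)))
      exact hcase ⟨x, y, ⟨e.trans f⟩⟩
    refine cut_case (α := α) (β := α + 2) ?_ hA hB ?_ c c' hc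
    · intro z w h
      have hlt : α + 1 < α + 2 := by
        gcongr
        norm_num
      rcases z with z | z <;> rcases w with w | w
      · exact iff_of_true ⟨z, rfl⟩ ⟨w, rfl⟩
      · exact absurd (bfT_mono hlt.le h) (key z w)
      · exact absurd (bfT_swap hlt h) (key w z)
      · refine iff_of_false ?_ ?_ <;> (rintro ⟨x, hx⟩; cases hx)
    · intro δ hδ
      rw [hm2, add_assoc, add_assoc]
      have h2 : 2 + δ ≤ α + 2 := (two_add_le δ).trans (by gcongr)
      gcongr
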